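/- arXiv:1406.4566 — 2 statements merged into one kernel-verified Lean document; each statement's English description precedes it below -/
import Mathlib

section
/- Let $T = (V, E)$ be a finite tree with a distance $d$ additive along paths and positive on edges. Let $X \subseteq V$ be a subset of nodes (the observed nodes) such that every node of $V \setminus X$ has degree at least 3. Define the surrogate of $h \in V$ as $\mathrm{Sg}(h) = \arg\min_{v \in X} d(h, v)$ (assume uniqueness). Then for every $v_j \in X$ and every $h \in \mathrm{Sg}^{-1}(v_j)$, every node on the path in $T$ from $v_j$ to $h$ also has surrogate $v_j$. -/
/-- `c` lies on the (unique) path from `a` to `b` in `G`. -/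
def SimpleGraph.OnPath {V : Type*} (G : SimpleGraph V) (a b c : V) : Prop :=
  ∀ p : G.Walk a b, p.IsPath → c ∈ p.support

/-!
Crossing an edge `u v` towards a target `b` either advances along the path to `b` or steps away
from it. In the first case `d u b` splits exactly; in the second the detour only adds nonnegative
length. Chaining edges gives the triangle inequality. A node `c` on the path from `vj` to `h` splits
`d h vj` exactly, while it only bounds `d h x` for the other observed nodes `x`, so the comparison
at `h` passes to `c` on cancelling `d h c`.
-/

theorem onPath_comm {V : Type*} {G : SimpleGraph V} {a b c : V} :
    G.OnPath a b c ↔ G.OnPath b a c := by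
  suffices h : ∀ {a b : V}, G.OnPath a b c → G.OnPath b a c from ⟨h, h⟩
  intro a b h p hp
  simpa only [SimpleGraph.Walk.support_reverse, List.mem_reverse] using h p.reverse hp.reverse

theorem onPath_of_mem_support {V : Type*} {G : SimpleGraph V} (hG : G.IsAcyclic) {a b c : V}
    {p : G.Walk a b} (hp : p.IsPath) (hc : c ∈ p.support) : G.OnPath a b c := by
  intro q hq
  have hqp : q = p := congrArg Subtype.val
    ((hG.subsingleton_path a b).elim ⟨q, hq⟩ ⟨p, hp⟩)
  exact hqp ▸ hc

theorem onPath_or_onPath_of_adj {V : Type*} {G : SimpleGraph V} (hT : G.IsTree) {u v : V}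
    (huv : G.Adj u v) (b : V) : G.OnPath u b v ∨ G.OnPath v b u := by
  obtain ⟨p, hp⟩ := (hT.connected v b).exists_isPath
  by_cases hu : u ∈ p.support
  · exact .inr (onPath_of_mem_support hT.isAcyclic hp hu)
  · exact .inl (onPath_of_mem_support hT.isAcyclic (hp.cons hu : (p.cons huv).IsPath)
      (List.mem_cons_of_mem u p.start_mem_support))

/-- `d` is additive along the paths of `G`: a vertex on the path from `a` to `b` splits `d a b` into
two summands. Neither symmetry nor positivity of `d` is part of the notion. -/
def PathAdditive {V R : Type*} [Add R] (G : SimpleGraph V) (d : V → V → R) : Prop :=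
  ∀ a b c : V, G.OnPath a b c → d a b = d a c + d c b

namespace PathAdditive

variable {V R : Type*} {G : SimpleGraph V} {d : V → V → R}

theorem apply_self [AddMonoid R] [IsLeftCancelAdd R] (hadd : PathAdditive G d) (a : V) :
    d a a = 0 :=
  left_eq_add.mp (hadd a a a fun p _ => p.start_mem_support)

variable [AddCommMonoid R] [PartialOrder R]

theorem le_add_of_adj [IsOrderedAddMonoid R] (hadd : PathAdditive G d) (hT : G.IsTree)
    (hnonneg : ∀ u v : V, G.Adj u v → 0 ≤ d u v) {u v : V} (huv : G.Adj u v) (b : V) :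
    d u b ≤ d u v + d v b := by
  rcases onPath_or_onPath_of_adj hT huv b with hv | hu
  · exact (hadd u b v hv).le
  · calc
      d u b ≤ d v u + d u b := le_add_of_nonneg_left (hnonneg v u huv.symm)
      _ = d v b := (hadd v b u hu).symm
      _ ≤ d u v + d v b := le_add_of_nonneg_left (hnonneg u v huv)

theorem triangle [IsOrderedCancelAddMonoid R] (hadd : PathAdditive G d) (hT : G.IsTree)
    (hnonneg : ∀ u v : V, G.Adj u v → 0 ≤ d u v) (a b c : V) :
    d a b ≤ d a c + d c b := by
  obtain ⟨p, hp⟩ := (hT.connected a c).exists_isPath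
  induction p with
  | nil => rw [hadd.apply_self, zero_add]
  | @cons u v w huv q ih =>
    have hv : G.OnPath u w v := onPath_of_mem_support hT.isAcyclic hp
      (List.mem_cons_of_mem u q.start_mem_support)
    calc
      d u b ≤ d u v + d v b := hadd.le_add_of_adj hT hnonneg huv b
      _ ≤ d u v + (d v w + d w b) := by gcongr; exact ih hp.of_cons
      _ = d u w + d w b := by rw [hadd u w v hv, add_assoc]

end PathAdditive

theorem surrogate_consistency_along_path_general
    {V R : Type*} [AddCommMonoid R] [PartialOrder R] [IsOrderedCancelAddMonoid R]
    {G : SimpleGraph V} {d : V → V → R} (hT : G.IsTree) (hadd : PathAdditive G d)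
    (hnonneg : ∀ u v : V, G.Adj u v → 0 ≤ d u v)
    {X : Set V} {vj h c : V} (hmin : IsMinOn (d h) X vj) (hc : G.OnPath vj h c) :
    IsMinOn (d c) X vj := by
  intro x hx
  have hle : d h c + d c vj ≤ d h c + d c x := calc
    d h c + d c vj = d h vj := (hadd h vj c (onPath_comm.mp hc)).symm
    _ ≤ d h x := hmin hx
    _ ≤ d h c + d c x := hadd.triangle hT hnonneg h x c
  exact le_of_add_le_add_left hle

theorem isMinOn_of_forall_ne_lt {α β : Type*} [Preorder β] {f : α → β} {s : Set α} {a : α}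
    (h : ∀ x ∈ s, x ≠ a → f a < f x) : IsMinOn f s a := by
  intro x hx
  rcases eq_or_ne x a with rfl | hne
  · exact le_rfl
  · exact (h x hx hne).le

/-- Surrogate consistency along paths: in a finite tree with a path-additive
distance positive on edges, with observed node set `X` such that every hidden
node (node outside `X`) has degree at least 3, if the surrogate map `Sg`
assigns to every node its unique closest observed node, then for every
`vⱼ ∈ X` and every node `h` with `Sg h = vⱼ`, every node on the path from
`vⱼ` to `h` also has surrogate `vⱼ`. -/
theorem surrogate_consistency_along_path
    {V : Type*} [Fintype V] (G : SimpleGraph V) [DecidableRel G.Adj]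
    (hT : G.IsTree) (d : V → V → ℝ)
    (hadd : ∀ a b c : V, G.OnPath a b c → d a b = d a c + d c b)
    (hpos : ∀ u v : V, G.Adj u v → 0 < d u v)
    (X : Set V)
    (hdeg : ∀ v : V, v ∉ X → 3 ≤ G.degree v)
    (Sg : V → V)
    (hSgX : ∀ v : V, Sg v ∈ X)
    (hSgmin : ∀ (v : V) (x : V), x ∈ X → x ≠ Sg v → d v (Sg v) < d v x) :
    ∀ vj : V, vj ∈ X → ∀ h : V, Sg h = vj →
      ∀ c : V, G.OnPath vj h c → Sg c = vj := by
  rintro vj hvj h rfl c hc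
  have hmin : IsMinOn (d c) X (Sg h) := surrogate_consistency_along_path_general hT hadd
    (fun u v huv => (hpos u v huv).le) (isMinOn_of_forall_ne_lt (hSgmin h)) hc
  by_contra hne
  exact (hSgmin c (Sg h) hvj (Ne.symm hne)).not_ge (hmin (hSgX c))
end

section
/- Let $T = (V, E)$ be a finite tree and let $a, b \in V$ be distinct. Let $P_1$ and $P_2$ be the vertex sequence of the (unique) path from $a$ to $b$ in $T$. If $T'$ is another tree on a vertex set $V'$ with $a, b \in V'$, and $T$ and $T'$ agree on $V \cap V'$ outside of the interiors of their $a$-$b$ paths, then the tree obtained by replacing the $a$-$b$ path of $T$ with the concatenation $[a, h_1^i, \ldots, h_2^i, h_1^j, \ldots, h_2^j, b]$ (keeping $h_1^i$ adjacent to $a$ from $T$'s path and $h_2^j$ adjacent to $b$ from $T'$'s path) is again a tree. -/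
/-!
Let `h` be the neighbor of `b` on the path in `G₁` and `k` the neighbor of `a` on the path in `G₂`.
Deleting the edge `h b` splits `G₁` into a part containing `a` and `h` and a part containing `b`.
As `G₁` meets `G₂` only in `a` and `b`, no two vertices of `G₂` are connected in what is left of
`G₁`, so gluing this forest onto any subforest of `G₂` creates no cycle and leaves reachability
between vertices of `G₂` unchanged. After the edge `a k` is deleted from `G₂` as well, `h` and `k`
therefore lie in different components, and the edge `h k` can be added without closing a cycle.
This edge also reconnects the endpoints of both deleted edges: `h ⋯ a` and `k ⋯ b` survive, so `b`
is reached from `h` through `k`, and `k` from `a` through `h`.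
-/

section

open SimpleGraph

variable {V : Type*} {G H : SimpleGraph V} {S T : Set V} {u v x y : V}

lemma reachable_of_deleteEdges_le (hle : G.deleteEdges {s(x, y)} ≤ H) (hxy : H.Reachable x y)
    (huv : G.Reachable u v) : H.Reachable u v := by
  obtain ⟨p⟩ := huv
  induction p with
  | nil => exact .rfl
  | @cons u w _ huw _ ih =>
    refine .trans ?_ ih
    by_cases he : s(u, w) = s(x, y)
    · obtain ⟨rfl, rfl⟩ | ⟨rfl, rfl⟩ := Sym2.eq_iff.1 he
      exacts [hxy, hxy.symm]
    · exact (hle <| deleteEdges_adj.2 ⟨huw, he⟩).reachable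

lemma reachable_deleteEdges_snd {p : G.Walk u v} (hp : p.IsPath) (hnil : ¬p.Nil) :
    (G.deleteEdges {s(u, p.snd)}).Reachable p.snd v := by
  refine ⟨p.tail.toDeleteEdge _ fun he ↦ ?_⟩
  rw [← p.cons_tail_eq hnil, Walk.cons_isPath_iff] at hp
  exact hp.2 (p.tail.fst_mem_support_of_mem_edges he)

lemma reachable_deleteEdges_penultimate {p : G.Walk u v} (hp : p.IsPath) (hnil : ¬p.Nil) :
    (G.deleteEdges {s(p.penultimate, v)}).Reachable p.penultimate u := by
  have h := reachable_deleteEdges_snd hp.reverse (by simpa using hnil)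
  rwa [Walk.snd_reverse, Sym2.eq_swap] at h

lemma preconnected_induce_iff_reachable (hS : G.support ⊆ S) :
    (G.induce S).Preconnected ↔ ∀ u ∈ S, ∀ v ∈ S, G.Reachable u v := by
  refine ⟨fun h u hu v hv ↦ (h ⟨u, hu⟩ ⟨v, hv⟩).map (Embedding.induce S).toHom, ?_⟩
  rintro h ⟨u, hu⟩ ⟨v, hv⟩
  obtain ⟨p⟩ := h u hu v hv
  refine ⟨p.induce S fun w hw ↦ ?_⟩
  by_cases hp : p.Nil
  · rw [Walk.nil_iff_support_eq.1 hp, List.mem_singleton] at hw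
    exact hw ▸ hu
  · exact hS (mem_support_of_mem_walk_support p hp hw)

lemma isAcyclic_induce_iff (hS : G.support ⊆ S) : (G.induce S).IsAcyclic ↔ G.IsAcyclic := by
  refine ⟨fun h v p hp ↦ ?_, fun h ↦ h.induce S⟩
  have hpS : ∀ w ∈ p.support, w ∈ S := fun w hw ↦
    hS (mem_support_of_mem_walk_support p hp.not_nil hw)
  refine h (p.induce S hpS) ?_
  rwa [← Walk.isCycle_map_iff_of_injective (f := (Embedding.induce (G := G) S).toHom)
    Subtype.val_injective, Walk.map_induce]

lemma pairwise_not_reachable_of_inter_subset_pair (hG : G.support ⊆ S) (hST : S ∩ T ⊆ {x, y})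
    (hxy : ¬G.Reachable x y) : T.Pairwise fun u v ↦ ¬G.Reachable u v := by
  intro u hu v hv hne huv
  have hu' := hST ⟨hG (mem_support_of_reachable hne huv), hu⟩
  have hv' := hST ⟨hG (mem_support_of_reachable hne.symm huv.symm), hv⟩
  obtain ⟨rfl | rfl, rfl | rfl⟩ := And.intro hu' hv'
  exacts [hne rfl, hxy huv, hxy huv.symm, hne rfl]

lemma reachable_sup_of_pairwise_not_reachable (hH : H.support ⊆ T)
    (hT : T.Pairwise fun x y ↦ ¬G.Reachable x y) (h : (G ⊔ H).Reachable u v) :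
    G.Reachable u v ∨
      ∃ x ∈ T, ∃ y ∈ T, G.Reachable u x ∧ H.Reachable x y ∧ G.Reachable y v := by
  obtain ⟨p⟩ := h
  induction p with
  | nil => exact .inl .rfl
  | @cons u w v huw _ ih =>
    obtain huw | huw := huw
    · obtain hwv | ⟨x, hx, y, hy, hwx, hxy, hyv⟩ := ih
      · exact .inl (huw.reachable.trans hwv)
      · exact .inr ⟨x, hx, y, hy, huw.reachable.trans hwx, hxy, hyv⟩
    · have hu : u ∈ T := hH huw.left_mem_support
      have hw : w ∈ T := hH huw.right_mem_support
      obtain hwv | ⟨x, hx, y, hy, hwx, hxy, hyv⟩ := ih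
      · exact .inr ⟨u, hu, w, hw, .rfl, huw.reachable, hwv⟩
      · obtain rfl : w = x := hT.eq hw hx (not_not.2 hwx)
        exact .inr ⟨u, hu, y, hy, .rfl, huw.reachable.trans hxy, hyv⟩

lemma reachable_sup_iff_of_pairwise_not_reachable (hH : H.support ⊆ T)
    (hT : T.Pairwise fun x y ↦ ¬G.Reachable x y) (hu : u ∈ T) (hv : v ∈ T) :
    (G ⊔ H).Reachable u v ↔ H.Reachable u v := by
  refine ⟨fun h ↦ ?_, fun h ↦ h.mono le_sup_right⟩
  obtain huv | ⟨x, hx, y, hy, hux, hxy, hyv⟩ :=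
    reachable_sup_of_pairwise_not_reachable hH hT h
  · rw [hT.eq hu hv (not_not.2 huv)]
  · rwa [hT.eq hu hx (not_not.2 hux), ← hT.eq hy hv (not_not.2 hyv)]

lemma isAcyclic_sup_of_pairwise_not_reachable (hH : H.support ⊆ T)
    (hT : T.Pairwise fun x y ↦ ¬G.Reachable x y) (hGa : G.IsAcyclic) (hHa : H.IsAcyclic) :
    (G ⊔ H).IsAcyclic := by
  rw [isAcyclic_iff_forall_adj_isBridge] at *
  intro u v huv
  rw [isBridge_iff, deleteEdges_sup]
  have hG'T : T.Pairwise fun x y ↦ ¬(G.deleteEdges {s(u, v)}).Reachable x y :=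
    hT.imp fun _ _ hxy h ↦ hxy (h.mono (deleteEdges_le _))
  have hH'T : (H.deleteEdges {s(u, v)}).support ⊆ T :=
    (support_mono (deleteEdges_le _)).trans hH
  obtain huv | huv := huv
  · intro h
    obtain h | ⟨x, hx, y, hy, hux, -, hyv⟩ :=
      reachable_sup_of_pairwise_not_reachable hH'T hG'T h
    · exact hGa huv h
    · have hxy : G.Reachable x y :=
        ((hux.mono (deleteEdges_le _)).symm.trans huv.reachable).trans
          (hyv.mono (deleteEdges_le _)).symm
      obtain rfl : x = y := hT.eq hx hy (not_not.2 hxy)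
      exact hGa huv (hux.trans hyv)
  · rw [reachable_sup_iff_of_pairwise_not_reachable hH'T hG'T (hH huv.left_mem_support)
      (hH huv.right_mem_support)]
    exact hHa huv

/-- The structure union of `G₁` and `G₂` along their conflicting paths `a ⋯ h b` and `a k ⋯ b`: the
edges `h b` of `G₁` and `a k` of `G₂` are replaced by `h k`, which leaves the concatenated path
`a ⋯ h k ⋯ b`. The paths enter only through their end edges. -/
def structureUnion (G₁ G₂ : SimpleGraph V) (a b h k : V) : SimpleGraph V :=
  G₁.deleteEdges {s(h, b)} ⊔ G₂.deleteEdges {s(a, k)} ⊔ fromEdgeSet {s(h, k)}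

section StructureUnion

variable {G₁ G₂ : SimpleGraph V} {S₁ S₂ : Set V} {a b h k : V}

lemma left_le_structureUnion : G₁.deleteEdges {s(h, b)} ≤ structureUnion G₁ G₂ a b h k :=
  le_sup_left.trans le_sup_left

lemma right_le_structureUnion : G₂.deleteEdges {s(a, k)} ≤ structureUnion G₁ G₂ a b h k :=
  le_sup_right.trans le_sup_left

lemma reachable_structureUnion : (structureUnion G₁ G₂ a b h k).Reachable h k := by
  obtain rfl | hne := eq_or_ne h k
  · exact .rfl
  · exact Adj.reachable (.inr ((fromEdgeSet_adj _).2 ⟨rfl, hne⟩))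

lemma support_structureUnion_subset (hG₁ : G₁.support ⊆ S₁) (hG₂ : G₂.support ⊆ S₂)
    (hh : h ∈ S₁) (hk : k ∈ S₂) : (structureUnion G₁ G₂ a b h k).support ⊆ S₁ ∪ S₂ := by
  rintro u ⟨v, (huv | huv) | huv⟩
  · exact .inl (hG₁ (deleteEdges_le _ huv).left_mem_support)
  · exact .inr (hG₂ (deleteEdges_le _ huv).left_mem_support)
  · obtain ⟨rfl, -⟩ | ⟨rfl, -⟩ := Sym2.eq_iff.1 ((fromEdgeSet_adj _).1 huv).1
    exacts [.inl hh, .inr hk]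

lemma preconnected_induce_structureUnion (hG₁ : G₁.support ⊆ S₁) (hG₂ : G₂.support ⊆ S₂)
    (hh : h ∈ S₁) (hk : k ∈ S₂) (ha : a ∈ S₁ ∩ S₂)
    (hc₁ : (G₁.induce S₁).Preconnected) (hc₂ : (G₂.induce S₂).Preconnected)
    (hha : (G₁.deleteEdges {s(h, b)}).Reachable h a)
    (hkb : (G₂.deleteEdges {s(a, k)}).Reachable k b) :
    ((structureUnion G₁ G₂ a b h k).induce (S₁ ∪ S₂)).Preconnected := by
  rw [preconnected_induce_iff_reachable hG₁] at hc₁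
  rw [preconnected_induce_iff_reachable hG₂] at hc₂
  rw [preconnected_induce_iff_reachable (support_structureUnion_subset hG₁ hG₂ hh hk)]
  have hhb : (structureUnion G₁ G₂ a b h k).Reachable h b :=
    reachable_structureUnion.trans (hkb.mono right_le_structureUnion)
  have hak : (structureUnion G₁ G₂ a b h k).Reachable a k :=
    (hha.mono left_le_structureUnion).symm.trans reachable_structureUnion
  have hreach : ∀ u ∈ S₁ ∪ S₂, (structureUnion G₁ G₂ a b h k).Reachable u a := by
    rintro u (hu | hu)
    · exact reachable_of_deleteEdges_le left_le_structureUnion hhb (hc₁ u hu a ha.1)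
    · exact reachable_of_deleteEdges_le right_le_structureUnion hak (hc₂ u hu a ha.2)
  exact fun u hu v hv ↦ (hreach u hu).trans (hreach v hv).symm

lemma isAcyclic_structureUnion (hG₁ : G₁.support ⊆ S₁) (hG₂ : G₂.support ⊆ S₂)
    (hS : S₁ ∩ S₂ ⊆ {a, b}) (ha₁ : G₁.IsAcyclic) (ha₂ : G₂.IsAcyclic)
    (hhb : G₁.Adj h b) (hak : G₂.Adj a k) (hha : (G₁.deleteEdges {s(h, b)}).Reachable h a) :
    (structureUnion G₁ G₂ a b h k).IsAcyclic := by
  have hnab : ¬(G₁.deleteEdges {s(h, b)}).Reachable a b := fun hab ↦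
    isAcyclic_iff_forall_adj_isBridge.1 ha₁ hhb (hha.trans hab)
  have hsep : S₂.Pairwise fun u v ↦ ¬(G₁.deleteEdges {s(h, b)}).Reachable u v :=
    pairwise_not_reachable_of_inter_subset_pair
      ((support_mono (deleteEdges_le _)).trans hG₁) hS hnab
  have hG₂' : (G₂.deleteEdges {s(a, k)}).support ⊆ S₂ :=
    (support_mono (deleteEdges_le _)).trans hG₂
  refine IsAcyclic.sup_edge_of_not_reachable (fun hhk ↦ ?_) <|
    isAcyclic_sup_of_pairwise_not_reachable hG₂' hsep (ha₁.anti (deleteEdges_le _))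
      (ha₂.anti (deleteEdges_le _))
  have hrak := (hha.mono le_sup_left).symm.trans hhk
  rw [reachable_sup_iff_of_pairwise_not_reachable hG₂' hsep (hG₂ hak.left_mem_support)
    (hG₂ hak.right_mem_support)] at hrak
  exact isAcyclic_iff_forall_adj_isBridge.1 ha₂ hak hrak

theorem structure_union_is_tree_general (hab : a ≠ b) (hS : S₁ ∩ S₂ = {a, b})
    (hG₁ : G₁.support ⊆ S₁) (hG₂ : G₂.support ⊆ S₂)
    (hT₁ : (G₁.induce S₁).IsTree) (hT₂ : (G₂.induce S₂).IsTree)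
    {p₁ : G₁.Walk a b} (hp₁ : p₁.IsPath) {p₂ : G₂.Walk a b} (hp₂ : p₂.IsPath) :
    ((structureUnion G₁ G₂ a b p₁.penultimate p₂.snd).induce (S₁ ∪ S₂)).IsTree := by
  have hnil₁ : ¬p₁.Nil := Walk.not_nil_of_ne hab
  have hnil₂ : ¬p₂.Nil := Walk.not_nil_of_ne hab
  have hhb := p₁.adj_penultimate hnil₁
  have hak := p₂.adj_snd hnil₂
  have hh := hG₁ hhb.left_mem_support
  have hk := hG₂ hak.right_mem_support
  have ha : a ∈ S₁ ∩ S₂ := hS ▸ Set.mem_insert a {b}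
  have hha := reachable_deleteEdges_penultimate hp₁ hnil₁
  have hkb := reachable_deleteEdges_snd hp₂ hnil₂
  refine ⟨(connected_iff _).2 ⟨?_, ⟨a, .inl ha.1⟩⟩, ?_⟩
  · exact preconnected_induce_structureUnion hG₁ hG₂ hh hk ha hT₁.connected.preconnected
      hT₂.connected.preconnected hha hkb
  · rw [isAcyclic_induce_iff (support_structureUnion_subset hG₁ hG₂ hh hk)]
    exact isAcyclic_structureUnion hG₁ hG₂ hS.subset ((isAcyclic_induce_iff hG₁).1 hT₁.isAcyclic)
      ((isAcyclic_induce_iff hG₂).1 hT₂.isAcyclic) hhb hak hha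

end StructureUnion

end

/-- Correctness of the structure-union (path-merging) step.  Two local latent
trees `G₁` (on vertex set `S₁`) and `G₂` (on vertex set `S₂`) share exactly
the two group leaders `a` and `b` (so they agree on `S₁ ∩ S₂` outside the
interiors of their `a`-`b` paths, which are disjoint).  Let
`h₂ⁱ = p₁.getVert (p₁.length - 1)` be the hidden neighbor of `b` on `G₁`'s
`a`-`b` path, and `h₁ʲ = p₂.getVert 1` the hidden neighbor of `a` on `G₂`'s
`a`-`b` path.  Replacing the two conflicting paths by the concatenation
`[a, h₁ⁱ, …, h₂ⁱ, h₁ʲ, …, h₂ʲ, b]` — i.e. deleting the edge `(h₂ⁱ, b)` from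
`G₁`, deleting the edge `(a, h₁ʲ)` from `G₂`, and adding the edge
`(h₂ⁱ, h₁ʲ)` — yields again a tree on `S₁ ∪ S₂`. -/
theorem structure_union_is_tree
    {V : Type*} [Fintype V] (G₁ G₂ : SimpleGraph V)
    (S₁ S₂ : Set V) (a b : V) (hab : a ≠ b)
    (hS : S₁ ∩ S₂ = {a, b})
    (hG₁S : ∀ u v : V, G₁.Adj u v → u ∈ S₁ ∧ v ∈ S₁)
    (hG₂S : ∀ u v : V, G₂.Adj u v → u ∈ S₂ ∧ v ∈ S₂)
    (hT₁ : (G₁.induce S₁).IsTree) (hT₂ : (G₂.induce S₂).IsTree)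
    (p₁ : G₁.Walk a b) (hp₁ : p₁.IsPath) (hlen₁ : 2 ≤ p₁.length)
    (p₂ : G₂.Walk a b) (hp₂ : p₂.IsPath) (hlen₂ : 2 ≤ p₂.length) :
    (((G₁.deleteEdges {s(p₁.getVert (p₁.length - 1), b)} ⊔
        G₂.deleteEdges {s(a, p₂.getVert 1)}) ⊔
        SimpleGraph.fromEdgeSet
          {s(p₁.getVert (p₁.length - 1), p₂.getVert 1)}).induce
      (S₁ ∪ S₂)).IsTree :=
  structure_union_is_tree_general hab hS (fun u ⟨v, huv⟩ ↦ (hG₁S u v huv).1)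
    (fun u ⟨v, huv⟩ ↦ (hG₂S u v huv).1) hT₁ hT₂ hp₁ hp₂
end
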